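/- arXiv:1411.0363 — 4 statements merged into one kernel-verified Lean document; each statement's English description precedes it below -/
import Mathlib

section
/- If V ⊆ ℂⁿ is an analytic polyhedron then V is an open set of holomorphy, i.e., every connected component of V is a domain of holomorphy. -/
open Set Metric Filter Topology

/-- A function `f`, holomorphic on the open set `U ⊆ ℂⁿ`, extends holomorphically to a point
`a`: there is a connected open neighbourhood `V` of `a` and a holomorphic `g` on `V` agreeing
with `f` on a nonempty open subset of `U ∩ V`. -/
def ExtendsHolomorphicallyTo {n : ℕ} (U : Set (Fin n → ℂ)) (f : (Fin n → ℂ) → ℂ)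
    (a : Fin n → ℂ) : Prop :=
  ∃ V : Set (Fin n → ℂ), IsOpen V ∧ IsConnected V ∧ a ∈ V ∧
    ∃ g : (Fin n → ℂ) → ℂ, DifferentiableOn ℂ g V ∧
      ∃ W : Set (Fin n → ℂ), IsOpen W ∧ W.Nonempty ∧ W ⊆ U ∩ V ∧ Set.EqOn f g W

/-- `U ⊆ ℂⁿ` is a domain of holomorphy: it is a domain (connected open set) and there exists a
holomorphic function on `U` which does not extend holomorphically to any point of `Uᶜ`. -/
def IsDomainOfHolomorphy {n : ℕ} (U : Set (Fin n → ℂ)) : Prop :=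
  IsOpen U ∧ IsConnected U ∧
    ∃ f : (Fin n → ℂ) → ℂ, DifferentiableOn ℂ f U ∧
      ∀ a ∈ Uᶜ, ¬ ExtendsHolomorphicallyTo U f a

/-!
Call `ball p (infDist p Dᶜ)` the inscribed ball at `p ∈ D`. A holomorphic function on `D` that
is unbounded on the inscribed ball at each point `p` of a dense subset of `D` extends nowhere:
for a would-be extension to `V`, a component of `D ∩ V` on which the two functions agree
accumulates at some `y ∈ V \ D` and contains the inscribed balls of its points close to `y`, but
the extension is bounded near `y`.

An inscribed ball touches `frontier D`, so a function blowing up at the contact point is unbounded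
on it. For a component of the polyhedron this function is `(f j - f j b)⁻¹`, where `b` is the
contact point and `1 ≤ ‖f j b‖`. Countably many such functions, rescaled to be locally uniformly
bounded as a family, are condensed into one: by Baire's theorem in `ℓ¹`, some absolutely summable
combination of them is unbounded on every one of the countably many balls.
-/

open Bornology
open scoped ENNReal NNReal Pointwise

section Topology

variable {X Y : Type*} [TopologicalSpace X]

lemma closure_connectedComponentIn_inter_subset (V : Set X) (x : X) :
    closure (connectedComponentIn V x) ∩ V ⊆ connectedComponentIn V x := by
  by_cases hx : x ∈ V
  · have hsub : connectedComponentIn V x ⊆ closure (connectedComponentIn V x) ∩ V :=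
      subset_inter subset_closure (connectedComponentIn_subset V x)
    exact (isPreconnected_connectedComponentIn.subset_closure hsub
      inter_subset_left).subset_connectedComponentIn (hsub (mem_connectedComponentIn hx))
        inter_subset_right
  · simp [connectedComponentIn_eq_empty hx]

lemma frontier_connectedComponentIn_subset [LocallyConnectedSpace X] {V : Set X} (hV : IsOpen V)
    (x : X) : frontier (connectedComponentIn V x) ⊆ frontier V := by
  rw [hV.connectedComponentIn.frontier_eq, hV.frontier_eq]
  exact fun b hb => ⟨closure_mono (connectedComponentIn_subset V x) hb.1,
    fun hbV => hb.2 (closure_connectedComponentIn_inter_subset V x ⟨hb.1, hbV⟩)⟩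

lemma exists_mem_closure_connectedComponentIn_notMem [LocallyConnectedSpace X]
    {D V : Set X} (hVc : IsPreconnected V) (hD : IsOpen D) (hV : IsOpen V) (hVD : ¬V ⊆ D)
    {w : X} (hw : w ∈ D ∩ V) : ∃ y ∈ V, y ∉ D ∧ y ∈ closure (connectedComponentIn (D ∩ V) w) := by
  by_contra! hcon
  have hVC : V ⊆ connectedComponentIn (D ∩ V) w := by
    refine hVc.subset_of_closure_inter_subset (hD.inter hV).connectedComponentIn
      ⟨w, hw.2, mem_connectedComponentIn hw⟩ fun y hy => ?_
    have hyD : y ∈ D := by_contra fun hyD => hcon y hy.2 hyD hy.1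
    exact closure_connectedComponentIn_inter_subset _ _ ⟨hy.1, hyD, hy.2⟩
  exact hVD fun y hy => (connectedComponentIn_subset _ _ (hVC hy)).1

lemma not_isBounded_image_of_tendsto_cobounded [Bornology Y] {A : Set X} {b : X} {h : X → Y}
    (hb : b ∈ closure A) (hh : Tendsto h (𝓝[A] b) (cobounded Y)) : ¬IsBounded (h '' A) := by
  intro hbdd
  have : (𝓝[A] b).NeBot := mem_closure_iff_nhdsWithin_neBot.1 hb
  obtain ⟨z, hzA, hz⟩ := (eventually_mem_nhdsWithin.and (hh (isBounded_def.1 hbdd))).exists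
  exact hz (mem_image_of_mem h hzA)

lemma tendsto_inv_sub_cobounded {𝕜 : Type*} [NormedDivisionRing 𝕜] {f : X → 𝕜} {V : Set X} {b : X}
    (hf : ContinuousWithinAt f V b) (hne : ∀ z ∈ V, f z ≠ f b) :
    Tendsto (fun z => (f z - f b)⁻¹) (𝓝[V] b) (cobounded 𝕜) := by
  have hsub : Tendsto (fun z => f z - f b) (𝓝[V] b) (𝓝 0) := by
    simpa using hf.tendsto.sub_const (f b)
  exact tendsto_inv₀_nhdsNE_zero.comp (tendsto_nhdsWithin_iff.2
    ⟨hsub, eventually_mem_nhdsWithin.mono fun z hz => sub_ne_zero.2 (hne z hz)⟩)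

lemma exists_pos_forall_eventually_norm_smul_le [LocallyCompactSpace X]
    [SecondCountableTopology X] {F κ : Type*} [NormedAddCommGroup F] [NormedSpace ℝ F]
    [Countable κ] {D : Set X} (hD : IsOpen D) {h : κ → X → F} (hh : ∀ k, ContinuousOn (h k) D) :
    ∃ w : κ → ℝ, (∀ k, 0 < w k) ∧ ∀ x ∈ D, ∃ M, ∀ᶠ y in 𝓝 x, ∀ k, ‖w k • h k y‖ ≤ M := by
  have := hD.locallyCompactSpace
  let K := CompactExhaustion.choice D
  obtain ⟨e, he⟩ := Countable.exists_injective_nat κ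
  have hbdd (k : κ) : ∃ C, ∀ y ∈ K (e k), ‖h k y‖ ≤ C :=
    (K.isCompact _).exists_bound_of_continuousOn (hh k).domRestrict.continuousOn
  choose C hC using hbdd
  -- On the `m`-th compact set of the exhaustion every term with `m ≤ e k` has norm at most `1`.
  refine ⟨fun k => (1 + |C k|)⁻¹, fun k => by positivity, fun x hx => ?_⟩
  obtain ⟨m, hm⟩ := K.exists_mem_nhds ⟨x, hx⟩
  have hmem : ∀ᶠ y in 𝓝 x, ∃ hy : y ∈ D, (⟨y, hy⟩ : D) ∈ K m := by
    rw [← map_nhds_subtype_coe_eq_nhds hx (hD.mem_nhds hx)]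
    exact mem_of_superset (image_mem_map hm) fun _ ⟨y, hy, hyx⟩ => hyx ▸ ⟨y.2, hy⟩
  have hfin : {k | e k < m}.Finite := (finite_lt_nat m).preimage he.injOn
  obtain ⟨M, hM⟩ := (hfin.image fun k => ‖(1 + |C k|)⁻¹ • h k x‖).bddAbove
  refine ⟨max 1 (M + 1), ?_⟩
  have hsmall : ∀ᶠ y in 𝓝 x, ∀ k ∈ {k | e k < m}, ‖(1 + |C k|)⁻¹ • h k y‖ < M + 1 := by
    refine (eventually_all_finite hfin).2 fun k hk => ?_
    have hlt : ‖(1 + |C k|)⁻¹ • h k x‖ < M + 1 :=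
      (hM (mem_image_of_mem _ hk)).trans_lt (lt_add_one M)
    exact (((hh k).continuousAt (hD.mem_nhds hx)).const_smul _).norm.eventually_lt_const hlt
  filter_upwards [hmem, hsmall] with y ⟨hyD, hyK⟩ hy k
  rcases lt_or_ge (e k) m with hk | hk
  · exact (hy k hk).le.trans (le_max_right _ _)
  · have hle : ‖h k y‖ ≤ 1 + |C k| := by
      linarith [hC k ⟨y, hyD⟩ (K.subset hk hyK), le_abs_self (C k)]
    refine le_max_of_le_left ?_
    rw [norm_smul, Real.norm_of_nonneg (by positivity)]
    exact inv_mul_le_one_of_le₀ hle (by positivity)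

end Topology

section Condensation

variable {𝕜 E F : Type*} [NontriviallyNormedField 𝕜] [AddCommGroup E] [Module 𝕜 E]
  [TopologicalSpace E] [NormedAddCommGroup F] [NormedSpace 𝕜 F]

/-- The subspace of vectors on which a family of continuous linear maps is pointwise bounded.
Being a subspace, it is the whole space as soon as it has an interior point, so a single vector
outside it makes it meagre. -/
def boundedPointsSubmodule {α : Type*} (T : α → E →L[𝕜] F) : Submodule 𝕜 E where
  carrier := {c | ∃ M, ∀ i, ‖T i c‖ ≤ M}
  zero_mem' := ⟨0, by simp⟩
  add_mem' := by
    rintro c d ⟨M, hM⟩ ⟨N, hN⟩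
    exact ⟨M + N, fun i => by rw [map_add]; exact norm_add_le_of_le (hM i) (hN i)⟩
  smul_mem' := by
    rintro a c ⟨M, hM⟩
    exact ⟨‖a‖ * M, fun i => by rw [map_smul, norm_smul]; gcongr; exact hM i⟩

lemma isBounded_range_iff_mem_boundedPointsSubmodule {α : Type*} {T : α → E →L[𝕜] F} {c : E} :
    IsBounded (range fun i => T i c) ↔ c ∈ boundedPointsSubmodule T := by
  simp only [isBounded_iff_forall_norm_le, forall_mem_range]
  rfl

theorem exists_forall_not_isBounded_range [BaireSpace E] [ContinuousAdd E] [ContinuousSMul 𝕜 E]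
    {κ : Type*} [Countable κ] {α : κ → Type*} {T : ∀ k, α k → E →L[𝕜] F}
    (hT : ∀ k, ∃ c, ¬IsBounded (range fun i => T k i c)) :
    ∃ c, ∀ k, ¬IsBounded (range fun i => T k i c) := by
  simp only [isBounded_range_iff_mem_boundedPointsSubmodule] at hT ⊢
  by_contra! hcon
  let S (q : κ × ℕ) : Set E := {c | ∀ i, ‖T q.1 i c‖ ≤ q.2}
  have hSclosed (q : κ × ℕ) : IsClosed (S q) := by
    simp only [S, ofPred_forall]
    exact isClosed_iInter fun i => isClosed_le (T q.1 i).continuous.norm continuous_const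
  have hScover : ⋃ q, S q = univ := by
    refine eq_univ_of_forall fun c => mem_iUnion.2 ?_
    obtain ⟨k, M, hM⟩ := hcon c
    obtain ⟨N, hN⟩ := exists_nat_ge M
    exact ⟨(k, N), fun i => (hM i).trans hN⟩
  obtain ⟨⟨k, N⟩, hint⟩ := nonempty_interior_of_iUnion_of_closed hSclosed hScover
  have hSsub : S (k, N) ⊆ boundedPointsSubmodule (T k) := fun c hc => ⟨N, hc⟩
  obtain ⟨c, hc⟩ := hT k
  have htop := (boundedPointsSubmodule (T k)).eq_top_of_nonempty_interior'
    (hint.mono (interior_mono hSsub))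
  exact hc (htop ▸ Submodule.mem_top)

end Condensation

section AbsolutelyConvergentSeries

variable {𝕜 F : Type*} [RCLike 𝕜] [NormedAddCommGroup F] [NormedSpace 𝕜 F] [CompleteSpace F]

lemma exists_continuousLinearMap_lp_one_apply_eq_tsum {κ : Type*} {v : κ → F}
    (hv : BddAbove (range fun k => ‖v k‖)) :
    ∃ T : lp (fun _ : κ => 𝕜) 1 →L[𝕜] F, ∀ c, T c = ∑' k, c k • v k := by
  let B (_ : κ) : 𝕜 →L[𝕜] F →L[𝕜] F := ContinuousLinearMap.lsmul 𝕜 𝕜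
  have hB (k : κ) : ‖B k‖ ≤ (1 : ℝ≥0) := ContinuousLinearMap.opNorm_lsmul_le
  let v' : lp (fun _ : κ => F) ∞ := ⟨v, memℓp_infty hv⟩
  exact ⟨(lp.dualPairing 1 ∞ B hB).flip v', fun c => lp.dualPairing_apply B hB c v'⟩

theorem exists_summable_forall_not_isBounded_image_tsum
    {X κ : Type*} [Countable κ] {A : κ → Set X} {g : κ → X → F}
    (hg : ∀ k, ∀ z ∈ A k, BddAbove (range fun j => ‖g j z‖))
    (hA : ∀ k, ¬IsBounded (g k '' A k)) :
    ∃ c : κ → 𝕜, (Summable fun k => ‖c k‖) ∧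
      ∀ k, ¬IsBounded ((fun z => ∑' j, c j • g j z) '' A k) := by
  classical
  choose T hT using fun k (z : A k) =>
    exists_continuousLinearMap_lp_one_apply_eq_tsum (𝕜 := 𝕜) (hg k z z.2)
  have hTA (k : κ) (c : lp (fun _ : κ => 𝕜) 1) :
      (range fun z => T k z c) = (fun z => ∑' j, c j • g j z) '' A k := by
    simp only [hT, image_eq_range]
  have hsingle (k : κ) (z : X) :
      ∑' j, lp.single (E := fun _ : κ => 𝕜) 1 k 1 j • g j z = g k z := by
    rw [tsum_eq_single k fun j hj => by rw [lp.single_apply_ne _ _ _ hj, zero_smul],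
      lp.single_apply_self, one_smul]
  obtain ⟨c, hc⟩ := exists_forall_not_isBounded_range (T := T) fun k =>
    ⟨lp.single 1 k 1, by simpa only [hTA, hsingle] using hA k⟩
  refine ⟨c, by simpa using (lp.memℓp c).summable (by simp), fun k => ?_⟩
  simpa only [hTA] using hc k

end AbsolutelyConvergentSeries

section Holomorphic

variable {E F : Type*} [NormedAddCommGroup E] [NormedSpace ℂ E] [NormedAddCommGroup F]
  [NormedSpace ℂ F]

lemma norm_fderiv_le_of_forall_mem_ball_norm_le {f : E → F} {c : E} {C R : ℝ}
    (hf : DifferentiableOn ℂ f (ball c R)) (hC : ∀ z ∈ ball c R, ‖f z‖ ≤ C) (hR : 0 < R) :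
    ‖fderiv ℂ f c‖ ≤ (C + C) / R := by
  refine Complex.norm_fderiv_le_div_of_mapsTo_ball hf (fun z hz => ?_) hR
  rw [mem_closedBall, dist_eq_norm]
  exact norm_sub_le_of_le (hC z hz) (hC c (mem_ball_self hR))

theorem differentiableOn_tsum_of_forall_norm_le [CompleteSpace F] {κ : Type*} {f : κ → E → F}
    {u : κ → ℝ} {D : Set E} (hu : Summable u) (hD : IsOpen D)
    (hf : ∀ k, DifferentiableOn ℂ (f k) D) (hfu : ∀ k, ∀ z ∈ D, ‖f k z‖ ≤ u k) :
    DifferentiableOn ℂ (fun z => ∑' k, f k z) D := by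
  intro z hz
  obtain ⟨r, hr, hrD⟩ := Metric.isOpen_iff.1 hD z hz
  have hball {y : E} (hy : y ∈ ball z (r / 2)) : ball y (r / 2) ⊆ D := by
    refine (ball_subset_ball' ?_).trans hrD
    linarith [mem_ball.1 hy]
  have hderiv (k : κ) (y : E) (hy : y ∈ ball z (r / 2)) :
      HasFDerivAt (f k) (fderiv ℂ (f k) y) y :=
    ((hf k).differentiableAt (hD.mem_nhds (hball hy (mem_ball_self (half_pos hr))))).hasFDerivAt
  have hbound (k : κ) (y : E) (hy : y ∈ ball z (r / 2)) :
      ‖fderiv ℂ (f k) y‖ ≤ (u k + u k) / (r / 2) :=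
    norm_fderiv_le_of_forall_mem_ball_norm_le ((hf k).mono (hball hy))
      (fun x hx => hfu k x (hball hy hx)) (half_pos hr)
  have hzr : z ∈ ball z (r / 2) := mem_ball_self (half_pos hr)
  exact (hasFDerivAt_tsum_of_isPreconnected ((hu.add hu).div_const _) isOpen_ball
    (convex_ball z (r / 2)).isPreconnected hderiv hbound hzr
    (hu.of_norm_bounded fun k => hfu k z hz) hzr).differentiableAt.differentiableWithinAt

lemma eqOn_ball_of_differentiableOn_of_eventuallyEq [CompleteSpace F] {f g : E → F} {c : E} {r : ℝ}
    (hf : DifferentiableOn ℂ f (ball c r)) (hg : DifferentiableOn ℂ g (ball c r))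
    (hfg : f =ᶠ[𝓝 c] g) : EqOn f g (ball c r) := by
  intro z hz
  let L (t : ℂ) : E := t • (z - c) + c
  have hL : Differentiable ℂ L := by fun_prop
  have hL0 : L 0 = c := by simp [L]
  have hL1 : L 1 = z := by simp [L]
  have hTo : IsOpen (L ⁻¹' ball c r) := isOpen_ball.preimage hL.continuous
  have hTc : Convex ℝ (L ⁻¹' ball c r) := by
    have hT : L ⁻¹' ball c r = LinearMap.toSpanSingleton ℂ E (z - c) ⁻¹' ball 0 r := by
      ext t
      simp [L, dist_eq_norm]
    exact hT ▸ (convex_ball (0 : E) r).linear_preimage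
      ((LinearMap.toSpanSingleton ℂ E (z - c)).restrictScalars ℝ)
  have hanalytic {u : E → F} (hu : DifferentiableOn ℂ u (ball c r)) :
      AnalyticOnNhd ℂ (u ∘ L) (L ⁻¹' ball c r) :=
    (hu.comp hL.differentiableOn (mapsTo_preimage L _)).analyticOnNhd hTo
  have h0 : (0 : ℂ) ∈ L ⁻¹' ball c r := by
    rw [mem_preimage, hL0]
    exact mem_ball_self (pos_of_mem_ball hz)
  have hnear : f ∘ L =ᶠ[𝓝 0] g ∘ L :=
    (hL.continuous.tendsto' 0 c hL0).eventually hfg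
  have heq := (hanalytic hf).eqOn_of_preconnected_of_eventuallyEq (hanalytic hg)
    hTc.isPreconnected h0 hnear
  simpa only [Function.comp_apply, hL1] using heq (x := 1) (by rwa [mem_preimage, hL1])

theorem eqOn_of_differentiableOn_of_isPreconnected_of_eventuallyEq [CompleteSpace F] {f g : E → F}
    {C : Set E} (hf : DifferentiableOn ℂ f C) (hg : DifferentiableOn ℂ g C) (hC : IsOpen C)
    (hCc : IsPreconnected C) {w : E} (hw : w ∈ C) (hfg : f =ᶠ[𝓝 w] g) : EqOn f g C := by
  have hsub : C ⊆ {z | f =ᶠ[𝓝 z] g} := by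
    refine hCc.subset_of_closure_inter_subset isOpen_setOfPred_eventually_nhds ⟨w, hw, hfg⟩ ?_
    rintro z ⟨hz, hzC⟩
    obtain ⟨r, hr, hrC⟩ := Metric.isOpen_iff.1 hC z hzC
    obtain ⟨y, hy, hyz⟩ := Metric.mem_closure_iff.1 hz (r / 2) (half_pos hr)
    have hball : ball y (r / 2) ⊆ C := by
      refine (ball_subset_ball' ?_).trans hrC
      linarith [dist_comm y z]
    exact (eqOn_ball_of_differentiableOn_of_eventuallyEq (hf.mono hball) (hg.mono hball)
      hy).eventuallyEq_of_mem (isOpen_ball.mem_nhds hyz)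
  exact fun z hz => (hsub hz).self_of_nhds

theorem exists_differentiableOn_forall_not_isBounded_image [ProperSpace E] [CompleteSpace F]
    {D : Set E} (hD : IsOpen D) {κ : Type*} [Countable κ] {A : κ → Set E} (hAD : ∀ k, A k ⊆ D)
    {h : κ → E → F} (hh : ∀ k, DifferentiableOn ℂ (h k) D)
    (hA : ∀ k, ¬IsBounded (h k '' A k)) :
    ∃ f : E → F, DifferentiableOn ℂ f D ∧ ∀ k, ¬IsBounded (f '' A k) := by
  obtain ⟨w, hw, hbdd⟩ := exists_pos_forall_eventually_norm_smul_le hD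
    fun k => (hh k).continuousOn
  let g (k : κ) (z : E) : F := w k • h k z
  have hgD (k : κ) : DifferentiableOn ℂ (g k) D := (hh k).const_smul (w k)
  have hgA (k : κ) : ¬IsBounded (g k '' A k) := by
    intro hgb
    refine hA k ?_
    have himage : (w k)⁻¹ • (g k '' A k) = h k '' A k := by
      simp only [g, ← image_smul, image_image, inv_smul_smul₀ (hw k).ne']
    exact himage ▸ hgb.smul₀ _
  have hgbdd (k : κ) (z : E) (hz : z ∈ A k) : BddAbove (range fun j => ‖g j z‖) := by
    obtain ⟨M, hM⟩ := hbdd z (hAD k hz)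
    exact ⟨M, forall_mem_range.2 hM.self_of_nhds⟩
  obtain ⟨c, hc, hcA⟩ := exists_summable_forall_not_isBounded_image_tsum (𝕜 := ℂ) hgbdd hgA
  refine ⟨fun z => ∑' k, c k • g k z, fun z hz => ?_, hcA⟩
  obtain ⟨M, hM⟩ := hbdd z hz
  obtain ⟨N, hNM, hN, hzN⟩ := _root_.eventually_nhds_iff.1 hM
  have hND := hN.inter hD
  have hterm (k : κ) (y : E) (hy : y ∈ N ∩ D) : ‖c k • g k y‖ ≤ ‖c k‖ * M := by
    rw [norm_smul]
    gcongr
    exact hNM y hy.1 k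
  have hsum : DifferentiableOn ℂ (fun z => ∑' k, c k • g k z) (N ∩ D) :=
    differentiableOn_tsum_of_forall_norm_le (hc.mul_right M) hND
      (fun k => ((hgD k).mono inter_subset_right).const_smul (c k)) hterm
  exact (hsum.differentiableAt (hND.mem_nhds ⟨hzN, hz⟩)).differentiableWithinAt

end Holomorphic

section InscribedBalls

variable {E : Type*} [NormedAddCommGroup E] [NormedSpace ℝ E] {D : Set E}

lemma exists_mem_frontier_mem_closure_ball_infDist [ProperSpace E] (hD : IsOpen D)
    (hne : Dᶜ.Nonempty) {p : E} (hp : p ∈ D) :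
    ∃ b ∈ frontier D, b ∈ closure (ball p (infDist p Dᶜ)) := by
  obtain ⟨b, hbD, hb⟩ := hD.isClosed_compl.exists_infDist_eq_dist hne p
  have hpos : 0 < infDist p Dᶜ := (hD.isClosed_compl.notMem_iff_infDist_pos hne).1 (· hp)
  have hbcl : b ∈ closure (ball p (infDist p Dᶜ)) := by
    rw [closure_ball p hpos.ne', mem_closedBall', hb]
  exact ⟨b, hD.frontier_eq ▸ ⟨closure_mono ball_infDist_compl_subset hbcl, hbD⟩, hbcl⟩

lemma exists_mem_dense_ball_infDist_subset {V : Set E} (hD : IsOpen D) (hV : IsOpen V) {w y : E}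
    (hyV : y ∈ V) (hyD : y ∉ D) (hy : y ∈ closure (connectedComponentIn (D ∩ V) w)) {Q : Set E}
    (hQ : Dense Q) {N : Set E} (hN : N ∈ 𝓝 y) :
    ∃ p ∈ Q ∩ D, ball p (infDist p Dᶜ) ⊆ connectedComponentIn (D ∩ V) w ∩ N := by
  obtain ⟨ε, hε, hball⟩ := Metric.mem_nhds_iff.1 (inter_mem hN (hV.mem_nhds hyV))
  obtain ⟨p, hpQ, hpy, hpC⟩ := hQ.exists_mem_open
    (isOpen_ball.inter (hD.inter hV).connectedComponentIn)
    (mem_closure_iff.1 hy (ball y (ε / 2)) isOpen_ball (mem_ball_self (half_pos hε)))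
  have hpD : p ∈ D := (connectedComponentIn_subset _ _ hpC).1
  have hpos : 0 < infDist p Dᶜ :=
    (hD.isClosed_compl.notMem_iff_infDist_pos ⟨y, hyD⟩).1 (· hpD)
  have hsub : ball p (infDist p Dᶜ) ⊆ N ∩ V := by
    refine (ball_subset_ball' ?_).trans hball
    linarith [infDist_le_dist_of_mem (x := p) (mem_compl hyD), mem_ball.1 hpy]
  refine ⟨p, ⟨hpQ, hpD⟩, subset_inter ?_ (hsub.trans inter_subset_left)⟩
  rw [connectedComponentIn_eq hpC]
  exact (convex_ball p _).isPreconnected.subset_connectedComponentIn (mem_ball_self hpos)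
    (subset_inter ball_infDist_compl_subset (hsub.trans inter_subset_right))

end InscribedBalls

section DomainsOfHolomorphy

variable {n : ℕ} {D : Set (Fin n → ℂ)}

theorem not_extendsHolomorphicallyTo_of_dense {F : (Fin n → ℂ) → ℂ} (hD : IsOpen D)
    (hF : DifferentiableOn ℂ F D) {Q : Set (Fin n → ℂ)} (hQ : Dense Q)
    (hFQ : ∀ p ∈ Q ∩ D, ¬IsBounded (F '' ball p (infDist p Dᶜ))) {a : Fin n → ℂ} (ha : a ∉ D) :
    ¬ExtendsHolomorphicallyTo D F a := by
  rintro ⟨V, hV, hVc, haV, g, hg, W, hW, ⟨w, hwW⟩, hWDV, hFg⟩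
  obtain ⟨y, hyV, hyD, hy⟩ := exists_mem_closure_connectedComponentIn_notMem hVc.isPreconnected
    hD hV (fun hVD => ha (hVD haV)) (hWDV hwW)
  have hC := connectedComponentIn_subset (D ∩ V) w
  have hFgC : EqOn F g (connectedComponentIn (D ∩ V) w) :=
    eqOn_of_differentiableOn_of_isPreconnected_of_eventuallyEq
      (hF.mono (hC.trans inter_subset_left)) (hg.mono (hC.trans inter_subset_right))
      (hD.inter hV).connectedComponentIn isPreconnected_connectedComponentIn
      (mem_connectedComponentIn (hWDV hwW)) (hFg.eventuallyEq_of_mem (hW.mem_nhds hwW))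
  have hgy : g ⁻¹' ball (g y) 1 ∈ 𝓝 y :=
    (hg.continuousOn.continuousAt (hV.mem_nhds hyV)).preimage_mem_nhds (ball_mem_nhds _ one_pos)
  obtain ⟨p, hp, hpC⟩ := exists_mem_dense_ball_infDist_subset hD hV hyV hyD hy hQ hgy
  refine hFQ p hp ?_
  rw [(hFgC.mono (hpC.trans inter_subset_left)).image_eq]
  exact isBounded_ball.subset (image_subset_iff.2 (hpC.trans inter_subset_right))

theorem isDomainOfHolomorphy_of_forall_mem_frontier (hD : IsOpen D) (hDc : IsConnected D)
    (hfr : ∀ b ∈ frontier D, ∃ h : (Fin n → ℂ) → ℂ,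
      DifferentiableOn ℂ h D ∧ Tendsto h (𝓝[D] b) (cobounded ℂ)) :
    IsDomainOfHolomorphy D := by
  rcases Dᶜ.eq_empty_or_nonempty with hempty | hne
  · exact ⟨hD, hDc, 0, differentiableOn_const 0, by simp [hempty]⟩
  obtain ⟨Q, hQc, hQ⟩ := TopologicalSpace.exists_countable_dense (Fin n → ℂ)
  have hblowup (p : ↥(Q ∩ D)) : ∃ h : (Fin n → ℂ) → ℂ,
      DifferentiableOn ℂ h D ∧ ¬IsBounded (h '' ball p.1 (infDist p.1 Dᶜ)) := by
    obtain ⟨b, hb, hbp⟩ := exists_mem_frontier_mem_closure_ball_infDist hD hne p.2.2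
    obtain ⟨h, hhD, hh⟩ := hfr b hb
    exact ⟨h, hhD, not_isBounded_image_of_tendsto_cobounded hbp
      (hh.mono_left (nhdsWithin_mono b ball_infDist_compl_subset))⟩
  choose h hhD hh using hblowup
  have : Countable ↥(Q ∩ D) := (hQc.mono inter_subset_left).to_subtype
  obtain ⟨F, hF, hFQ⟩ := exists_differentiableOn_forall_not_isBounded_image hD
    (fun _ => ball_infDist_compl_subset) hhD hh
  exact ⟨hD, hDc, F, hF, fun a ha =>
    not_extendsHolomorphicallyTo_of_dense hD hF hQ (fun p hp => hFQ ⟨p, hp⟩) ha⟩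

end DomainsOfHolomorphy

lemma isOpen_setOf_mem_and_forall_norm_lt {X ι F : Type*} [TopologicalSpace X] [Finite ι]
    [SeminormedAddCommGroup F] {U : Set X} (hU : IsOpen U) {f : ι → X → F}
    (hf : ∀ j, ContinuousOn (f j) U) (r : ℝ) : IsOpen {z ∈ U | ∀ j, ‖f j z‖ < r} := by
  refine isOpen_iff_mem_nhds.2 fun z ⟨hzU, hz⟩ => inter_mem (hU.mem_nhds hzU) ?_
  exact eventually_all.2 fun j =>
    ((hf j).continuousAt (hU.mem_nhds hzU)).norm.eventually_lt_const (hz j)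

theorem analytic_polyhedron_isOpenSetOfHolomorphy_general {n : ℕ} {ι : Type*}
    {V : Set (Fin n → ℂ)} (hVo : IsOpen V) {f : ι → (Fin n → ℂ) → ℂ}
    (hf : ∀ j, DiffContOnCl ℂ (f j) V) (hV : ∀ z ∈ closure V, z ∈ V ↔ ∀ j, ‖f j z‖ < 1) :
    ∀ x ∈ V, IsDomainOfHolomorphy (connectedComponentIn V x) := by
  intro x hx
  have hCV := connectedComponentIn_subset V x
  refine isDomainOfHolomorphy_of_forall_mem_frontier hVo.connectedComponentIn
    (isConnected_connectedComponentIn_iff.2 hx) fun b hb => ?_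
  obtain ⟨hbcl, hbV⟩ := hVo.frontier_eq ▸ frontier_connectedComponentIn_subset hVo x hb
  obtain ⟨j, hj⟩ : ∃ j, 1 ≤ ‖f j b‖ := by simpa using mt (hV b hbcl).2 hbV
  have hne (z : Fin n → ℂ) (hz : z ∈ V) : f j z ≠ f j b := fun heq =>
    hj.not_gt (heq ▸ (hV z (subset_closure hz)).1 hz j)
  have hjV := (hf j).differentiableOn
  refine ⟨fun z => (f j z - f j b)⁻¹, ?_, ?_⟩
  · exact ((hjV.sub_const _).inv fun z hz => sub_ne_zero.2 (hne z hz)).mono hCV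
  · exact (tendsto_inv_sub_cobounded (((hf j).continuousOn b hbcl).mono subset_closure)
      hne).mono_left (nhdsWithin_mono b hCV)

/-- An analytic polyhedron `V = {z ∈ U : |f_j z| < 1, 1 ≤ j ≤ m}` (with `f₁, …, f_m` holomorphic
on the open set `U` and `closure V ⊆ U`) is an open set of holomorphy: every connected
component of `V` is a domain of holomorphy. -/
theorem analytic_polyhedron_isOpenSetOfHolomorphy {n m : ℕ} (U : Set (Fin n → ℂ))
    (hU : IsOpen U) (f : Fin m → (Fin n → ℂ) → ℂ) (hf : ∀ j, DifferentiableOn ℂ (f j) U)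
    (V : Set (Fin n → ℂ)) (hV : V = {z ∈ U | ∀ j, ‖f j z‖ < 1})
    (hcl : closure V ⊆ U) :
    ∀ x ∈ V, IsDomainOfHolomorphy (connectedComponentIn V x) :=
  analytic_polyhedron_isOpenSetOfHolomorphy_general
    (hV ▸ isOpen_setOf_mem_and_forall_norm_lt hU (fun j => (hf j).continuousOn) 1)
    (fun j => ((hf j).mono hcl).diffContOnCl)
    fun z hz => by simpa only [mem_ofPred_eq, hcl hz, true_and] using Set.ext_iff.1 hV z
end

section
/- Let U ⊆ ℂⁿ be a domain, K ⊆ U a compact set such that K equals its holomorphically convex hull K̂ in U, and V ⊆ U a neighbourhood of K. Then there exist finitely many holomorphic functions f₁,…,f_m on U and an open set W with V ⊇ W ⊇ K such that L := {z ∈ W : |f_j(z)| ≤ 1 for 1 ≤ j ≤ m} is a compact analytic polyhedron with K ⊆ L ⊆ V. -/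
open Set Metric Filter Topology

/-- The holomorphically convex hull of `K` in `U`:
`K̂ = {z ∈ U : ‖f z‖ ≤ sup_{w ∈ K} ‖f w‖ for every f holomorphic on U}`. -/
def holConvexHull {n : ℕ} (U K : Set (Fin n → ℂ)) : Set (Fin n → ℂ) :=
  {z ∈ U | ∀ f : (Fin n → ℂ) → ℂ, DifferentiableOn ℂ f U → ‖f z‖ ≤ ⨆ w : K, ‖f w‖}

/-!
Choose a compact neighbourhood `L` of `K` inside `V`. Every point of the frontier of `L` lies
outside the hull of `K`, so some function, after rescaling, has norm at most `1` on `K` and norm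
greater than `1` near that point. By compactness finitely many of these functions suffice for the
whole frontier. Since no point of the frontier satisfies all the inequalities `‖f j z‖ ≤ 1`, these
inequalities cut out the same set in `interior L` as in `L`, and the latter is compact.
-/

section

variable {X E ι : Type*} [SeminormedAddCommGroup E]

/-- The hull of `K` with respect to a family `A` of functions, the abstract form of `holConvexHull`:
the hull in `U` is `U ∩ functionHull A K`. A member of `A` unbounded on `K` has supremum `0` here,
so the notion is meant for functions bounded on `K`. -/
def functionHull (A : Set (X → E)) (K : Set X) : Set X :=
  {z | ∀ f ∈ A, ‖f z‖ ≤ ⨆ w : K, ‖f w‖}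

/-- The polyhedron in `W` with frame `f`: the points of `W` at which every `f j` has norm at most
`1`. Neither holomorphy of the frame nor compactness is part of the definition. -/
def polyhedron (W : Set X) (f : ι → X → E) : Set X :=
  {z ∈ W | ∀ j, ‖f j z‖ ≤ 1}

theorem exists_norm_le_one_and_one_lt_norm_of_notMem_functionHull [NormedSpace ℝ E]
    {A : Set (X → E)} (hA : ∀ c : ℝ, 0 < c → ∀ f ∈ A, c • f ∈ A) {K : Set X}
    (hbdd : ∀ f ∈ A, BddAbove (range fun w : K ↦ ‖f w‖)) {z : X} (hz : z ∉ functionHull A K) :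
    ∃ f ∈ A, (∀ w ∈ K, ‖f w‖ ≤ 1) ∧ 1 < ‖f z‖ := by
  obtain ⟨f, hfA, hfz⟩ : ∃ f ∈ A, ⨆ w : K, ‖f w‖ < ‖f z‖ := by
    simpa only [functionHull, mem_ofPred_eq, not_forall, not_le, exists_prop] using hz
  obtain ⟨c, hsup, hcz⟩ := exists_between hfz
  have hc : 0 < c := (Real.iSup_nonneg fun w ↦ norm_nonneg _).trans_lt hsup
  have hnorm (w : X) : ‖(c⁻¹ • f) w‖ = ‖f w‖ / c := by
    rw [Pi.smul_apply, norm_smul, norm_inv, Real.norm_of_nonneg hc.le, inv_mul_eq_div]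
  refine ⟨c⁻¹ • f, hA _ (inv_pos.2 hc) f hfA, fun w hw ↦ ?_, ?_⟩
  · rw [hnorm, div_le_one hc]
    exact (le_ciSup (hbdd f hfA) ⟨w, hw⟩).trans hsup.le
  · rwa [hnorm, one_lt_div hc]

end

section

variable {X E ι : Type*} [TopologicalSpace X] [SeminormedAddCommGroup E]

theorem exists_fin_family_one_lt_norm {B : Set (X → E)} {C : Set X} (hC : IsCompact C)
    (hB : ∀ z ∈ C, ∃ f ∈ B, ContinuousAt f z ∧ 1 < ‖f z‖) :
    ∃ (m : ℕ) (f : Fin m → X → E), (∀ j, f j ∈ B) ∧ ∀ z ∈ C, ∃ j, 1 < ‖f j z‖ := by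
  choose! g hgB hgcont hgz using hB
  obtain ⟨t, htC, hcover⟩ := hC.elim_nhds_subcover (fun z ↦ {w | 1 < ‖g z w‖})
    fun z hz ↦ (hgcont z hz).norm.eventually_const_lt (hgz z hz)
  refine ⟨t.card, fun j ↦ g (t.equivFin.symm j), fun j ↦ hgB _ (htC _ (t.equivFin.symm j).2),
    fun z hz ↦ ?_⟩
  obtain ⟨x, hxt, (hxz : 1 < ‖g x z‖)⟩ := mem_iUnion₂.1 (hcover hz)
  exact ⟨t.equivFin ⟨x, hxt⟩, by simpa only [Equiv.symm_apply_apply] using hxz⟩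

theorem isClosed_polyhedron {L : Set X} (hL : IsClosed L) {f : ι → X → E}
    (hf : ∀ j, ContinuousOn (f j) L) : IsClosed (polyhedron L f) :=
  (continuousOn_pi.2 fun j ↦ (hf j).norm).preimage_isClosed_of_isClosed hL
    (isClosed_Iic (a := fun _ : ι ↦ (1 : ℝ)))

theorem polyhedron_interior_eq {L : Set X} {f : ι → X → E}
    (hf : ∀ z ∈ frontier L, ∃ j, 1 < ‖f j z‖) : polyhedron (interior L) f = polyhedron L f := by
  refine Subset.antisymm (fun z hz ↦ ⟨interior_subset hz.1, hz.2⟩) fun z hz ↦ ⟨?_, hz.2⟩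
  by_contra hzL
  obtain ⟨j, hj⟩ := hf z ⟨subset_closure hz.1, hzL⟩
  exact hj.not_ge (hz.2 j)

theorem exists_compact_analytic_polyhedron_general [LocallyCompactSpace X] [RegularSpace X]
    [NormedSpace ℝ E] {A : Set (X → E)} (hA : ∀ c : ℝ, 0 < c → ∀ f ∈ A, c • f ∈ A) {K V : Set X}
    (hAV : ∀ f ∈ A, ContinuousOn f V) (hK : IsCompact K) (hV : IsOpen V) (hKV : K ⊆ V)
    (hhull : V ∩ functionHull A K ⊆ K) :
    ∃ (m : ℕ) (f : Fin m → X → E), (∀ j, f j ∈ A) ∧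
      ∃ W : Set X, IsOpen W ∧ K ⊆ W ∧ W ⊆ V ∧
        IsCompact (polyhedron W f) ∧ K ⊆ polyhedron W f ∧ polyhedron W f ⊆ V := by
  obtain ⟨L, hL, hLclosed, hKL, hLV⟩ := exists_compact_closed_between hK hV hKV
  have hfrontierL : frontier L ⊆ L := hLclosed.frontier_subset
  have hbdd : ∀ f ∈ A, BddAbove (range fun w : K ↦ ‖f w‖) := fun f hf ↦ by
    simpa only [image_eq_range] using hK.bddAbove_image ((hAV f hf).mono hKV).norm
  have hsep : ∀ z ∈ frontier L,
      ∃ f ∈ {f ∈ A | ∀ w ∈ K, ‖f w‖ ≤ 1}, ContinuousAt f z ∧ 1 < ‖f z‖ := fun z hz ↦ by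
    have hzV : z ∈ V := hLV (hfrontierL hz)
    obtain ⟨f, hfA, hfK, hfz⟩ := exists_norm_le_one_and_one_lt_norm_of_notMem_functionHull hA hbdd
      fun hzK ↦ hz.2 (hKL (hhull ⟨hzV, hzK⟩))
    exact ⟨f, ⟨hfA, hfK⟩, (hAV f hfA).continuousAt (hV.mem_nhds hzV), hfz⟩
  obtain ⟨m, f, hf, hfrontier⟩ :=
    exists_fin_family_one_lt_norm (hL.of_isClosed_subset isClosed_frontier hfrontierL) hsep
  have hcompact : IsCompact (polyhedron L f) := hL.of_isClosed_subset
    (isClosed_polyhedron hLclosed fun j ↦ (hAV _ (hf j).1).mono hLV) (sep_subset L _)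
  have hWV : interior L ⊆ V := interior_subset.trans hLV
  exact ⟨m, f, fun j ↦ (hf j).1, interior L, isOpen_interior, hKL, hWV,
    (polyhedron_interior_eq hfrontier).symm ▸ hcompact,
    fun w hw ↦ ⟨hKL hw, fun j ↦ (hf j).2 w hw⟩, fun z hz ↦ hWV hz.1⟩

end

theorem holConvexHull_eq_inter_functionHull {n : ℕ} (U K : Set (Fin n → ℂ)) :
    holConvexHull U K = U ∩ functionHull {f : (Fin n → ℂ) → ℂ | DifferentiableOn ℂ f U} K := rfl

/-- Let `U` be a domain, `K ⊆ U` compact with `K = K̂` (its holomorphically convex hull in `U`)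
and `V ⊆ U` an open neighbourhood of `K`.  Then there exist finitely many functions
`f₁, …, f_m` holomorphic on `U` and an open set `W` with `K ⊆ W ⊆ V` such that
`L = {z ∈ W : |f_j z| ≤ 1, 1 ≤ j ≤ m}` is a compact analytic polyhedron with `K ⊆ L ⊆ V`. -/
theorem exists_compact_analytic_polyhedron {n : ℕ} (U : Set (Fin n → ℂ))
    (hUo : IsOpen U) (hUc : IsConnected U)
    (K : Set (Fin n → ℂ)) (hKU : K ⊆ U) (hK : IsCompact K)
    (hhull : holConvexHull U K = K)
    (V : Set (Fin n → ℂ)) (hVo : IsOpen V) (hKV : K ⊆ V) (hVU : V ⊆ U) :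
    ∃ (m : ℕ) (f : Fin m → (Fin n → ℂ) → ℂ), (∀ j, DifferentiableOn ℂ (f j) U) ∧
      ∃ W : Set (Fin n → ℂ), IsOpen W ∧ K ⊆ W ∧ W ⊆ V ∧
        IsCompact {z ∈ W | ∀ j, ‖f j z‖ ≤ 1} ∧
        K ⊆ {z ∈ W | ∀ j, ‖f j z‖ ≤ 1} ∧
        {z ∈ W | ∀ j, ‖f j z‖ ≤ 1} ⊆ V := by
  rw [holConvexHull_eq_inter_functionHull] at hhull
  exact exists_compact_analytic_polyhedron_general
    (A := {f : (Fin n → ℂ) → ℂ | DifferentiableOn ℂ f U})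
    (fun c _ f (hf : DifferentiableOn ℂ f U) ↦ hf.const_smul c)
    (fun _ hf ↦ hf.continuousOn.mono hVU) hK hVo hKV
    ((inter_subset_inter_left _ hVU).trans hhull.subset)
end

section
/- If U ⊆ ℂⁿ is a domain of holomorphy then U satisfies the continuity principle. -/
open Set Metric Filter Topology

/-- A sequence of sets `A j` converges to the set `B` (in the `L∞` metric of `Fin n → ℂ`): for
every `ε > 0`, eventually each of `A j` and `B` is contained in the `ε`-enlargement of the
other. -/
def SetConvergesTo {n : ℕ} (A : ℕ → Set (Fin n → ℂ)) (B : Set (Fin n → ℂ)) : Prop :=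
  ∀ ε : ℝ, 0 < ε → ∃ J : ℕ, ∀ j ≥ J,
    A j ⊆ Metric.thickening ε B ∧ B ⊆ Metric.thickening ε (A j)

/-- `U` satisfies the continuity principle: for every sequence of holomorphic discs `S j`
(continuous on the closed unit disc, holomorphic on the open unit disc) contained together with
their boundaries in `U`, if the boundaries `∂S_j = S j '' sphere 0 1` converge to a compact
`B ⊆ U` and the discs `S j '' ball 0 1` converge to a compact `T`, then `T ⊆ U`. -/
def SatisfiesContinuityPrinciple {n : ℕ} (U : Set (Fin n → ℂ)) : Prop :=
  ∀ S : ℕ → ℂ → (Fin n → ℂ),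
    (∀ j, ContinuousOn (S j) (Metric.closedBall 0 1)) →
    (∀ j, DifferentiableOn ℂ (S j) (Metric.ball 0 1)) →
    (∀ j, S j '' Metric.closedBall 0 1 ⊆ U) →
    ∀ B T : Set (Fin n → ℂ), IsCompact B → B ⊆ U → IsCompact T →
      SetConvergesTo (fun j => S j '' Metric.sphere 0 1) B →
      SetConvergesTo (fun j => S j '' Metric.ball 0 1) T →
      T ⊆ U

/-!
Let `f` be holomorphic on `U` and non-extendable to every point of `Uᶜ`. For a fixed increment `v`,
the `k`-th Taylor term of `f` at `x` in the direction `v` is a holomorphic function of `x`, so on a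
disc `S_j` its norm is at most its maximum over `∂S_j`. Near the compact set `B` the function `f` is
bounded, so Cauchy's estimates hold on `∂S_j` with a radius `r` that does not depend on `j`, and by
the maximum principle they hold on all of `S_j`. Hence the Taylor series of `f` at every point of
`S_j` converges on the ball of radius `r` around it. A point of `T` lies in such a ball for large
`j`, so `f` extends to it and the point belongs to `U`.

Holomorphy means Fréchet differentiability. That directional derivatives are again holomorphic
comes from writing them as uniform limits of difference quotients, whose rate of convergence is
controlled by the Schwarz lemma.
-/

lemma mapsTo_closedBall_two_mul {X F : Type*} [SeminormedAddCommGroup F] {g : X → F} {s : Set X}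
    {c : X} {M : ℝ} (hM : ∀ y ∈ s, ‖g y‖ ≤ M) (hc : c ∈ s) :
    MapsTo g s (closedBall (g c) (2 * M)) := by
  intro y hy
  rw [mem_closedBall, two_mul]
  exact (dist_le_norm_add_norm _ _).trans (add_le_add (hM y hy) (hM c hc))

lemma exists_thickening_subset_norm_le {X F : Type*} [PseudoMetricSpace X]
    [SeminormedAddCommGroup F] {f : X → F} {U B : Set X} (hB : IsCompact B) (hU : IsOpen U)
    (hBU : B ⊆ U) (hf : ContinuousOn f U) :
    ∃ δ > 0, thickening δ B ⊆ U ∧ ∃ M, ∀ x ∈ thickening δ B, ‖f x‖ ≤ M := by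
  obtain ⟨M, hM⟩ := hB.exists_bound_of_continuousOn (hf.mono hBU)
  have hopen : IsOpen (U ∩ (fun x => ‖f x‖) ⁻¹' Iio (M + 1)) :=
    hf.norm.isOpen_inter_preimage hU isOpen_Iio
  obtain ⟨δ, hδ, hsub⟩ := hB.exists_thickening_subset_open hopen fun x hx =>
    ⟨hBU hx, (hM x hx).trans_lt (lt_add_one M)⟩
  exact ⟨δ, hδ, fun x hx => (hsub hx).1, M + 1, fun x hx => (hsub hx).2.le⟩

section Holomorphic

variable {E F : Type*} [NormedAddCommGroup E] [NormedSpace ℂ E] [NormedAddCommGroup F]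
  [NormedSpace ℂ F] {f : E → F} {U : Set E} {x v : E} {r R M : ℝ}

lemma norm_fderiv_le_of_forall_mem_ball (hr : 0 < r) (hf : DifferentiableOn ℂ f (ball x r))
    (hM : ∀ y ∈ ball x r, ‖f y‖ ≤ M) : ‖fderiv ℂ f x‖ ≤ 2 * M / r :=
  Complex.norm_fderiv_le_div_of_mapsTo_ball hf
    (mapsTo_closedBall_two_mul hM (mem_ball_self hr)) hr

lemma uniformCauchySeqOn_fderiv {ι : Type*} {l : Filter ι} {G : ι → E → F}
    (hr : 0 < r) (hG : ∀ᶠ i in l, DifferentiableOn ℂ (G i) (ball x (2 * r)))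
    (h : UniformCauchySeqOn G l (ball x (2 * r))) :
    UniformCauchySeqOn (fun i => fderiv ℂ (G i)) l (ball x r) := by
  intro u hu
  obtain ⟨ε, hε, hεu⟩ := mem_uniformity_dist.1 hu
  filter_upwards [h _ (dist_mem_uniformity (show 0 < ε * r / 4 by positivity)), hG.prod_mk hG]
    with i hi hGi y hy
  have hsub : ball y r ⊆ ball x (2 * r) :=
    ball_subset_ball' (by linarith [mem_ball.1 hy])
  have hdiff : ∀ j, DifferentiableOn ℂ (G j) (ball x (2 * r)) → DifferentiableAt ℂ (G j) y :=
    fun j hj => hj.differentiableAt (isOpen_ball.mem_nhds (hsub (mem_ball_self hr)))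
  apply hεu
  rw [dist_eq_norm, ← fderiv_sub (hdiff _ hGi.1) (hdiff _ hGi.2)]
  calc ‖fderiv ℂ (G i.1 - G i.2) y‖ ≤ 2 * (ε * r / 4) / r :=
        norm_fderiv_le_of_forall_mem_ball hr ((hGi.1.sub hGi.2).mono hsub) fun z hz => by
          simpa [dist_eq_norm] using (hi z (hsub hz)).le
    _ = ε / 2 := by field_simp; norm_num
    _ < ε := half_lt_self hε

lemma mapsTo_line_ball (hv : R * ‖v‖ < r) :
    MapsTo (fun ζ : ℂ => x + ζ • v) (closedBall 0 R) (ball x r) := by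
  intro ζ hζ
  rw [mem_ball, dist_eq_norm, add_sub_cancel_left, norm_smul]
  exact (mul_le_mul_of_nonneg_right (mem_closedBall_zero_iff.1 hζ) (norm_nonneg v)).trans_lt hv

lemma differentiableOn_comp_line (hf : DifferentiableOn ℂ f (ball x r)) (hv : R * ‖v‖ < r) :
    DifferentiableOn ℂ (fun ζ : ℂ => f (x + ζ • v)) (closedBall 0 R) :=
  hf.comp (f := fun ζ : ℂ => x + ζ • v) (by fun_prop) (mapsTo_line_ball hv)

/-- The `k`-th homogeneous term of the Taylor expansion of `f` at `x`, as a function of the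
increment `v`: the coefficient of `ζ ^ k` in the Taylor series of `ζ ↦ f (x + ζ • v)` at `0`. -/
noncomputable def taylorTerm (f : E → F) (k : ℕ) (x v : E) : F :=
  (k.factorial : ℂ)⁻¹ • iteratedDeriv k (fun ζ : ℂ => f (x + ζ • v)) 0

variable [CompleteSpace F]

theorem differentiableOn_of_tendstoUniformlyOn {ι : Type*} {l : Filter ι} [l.NeBot]
    {G : ι → E → F} {g : E → F} (hU : IsOpen U) (hG : ∀ᶠ i in l, DifferentiableOn ℂ (G i) U)
    (h : TendstoUniformlyOn G g l U) : DifferentiableOn ℂ g U := by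
  intro x hx
  obtain ⟨r, hr, hrU⟩ : ∃ r > 0, ball x (2 * r) ⊆ U := by
    obtain ⟨ε, hε, hεU⟩ := Metric.isOpen_iff.1 hU x hx
    exact ⟨ε / 2, half_pos hε, by rwa [mul_div_cancel₀ ε two_ne_zero]⟩
  have hball : ball x r ∈ 𝓝 x := ball_mem_nhds x hr
  have hrU' : ball x r ⊆ U := (ball_subset_ball (by linarith)).trans hrU
  have hcauchy : UniformCauchySeqOn (fun i => fderiv ℂ (G i)) l (ball x r) :=
    uniformCauchySeqOn_fderiv hr (hG.mono fun i hi => hi.mono hrU) (h.mono hrU).uniformCauchySeqOn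
  choose! g' hg' using fun y (hy : y ∈ ball x r) =>
    cauchy_map_iff_exists_tendsto.1 (hcauchy.cauchy_map hy)
  refine (hasFDerivAt_of_tendstoUniformlyOnFilter (f := G)
    ((hcauchy.tendstoUniformlyOn_of_tendsto hg').tendstoUniformlyOnFilter.mono_right
      (le_principal_iff.2 hball)) ?_ ?_).differentiableAt.differentiableWithinAt
  · filter_upwards [hG.prod_mk hball] with q hq
    exact (hq.1.differentiableAt (hU.mem_nhds (hrU' hq.2))).hasFDerivAt
  · filter_upwards [hball] with y hy using h.tendsto_at (hrU' hy)

lemma norm_dslope_sub_deriv_le {φ : ℂ → F} {c t : ℂ} (hφ : DifferentiableOn ℂ φ (ball c R))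
    (hM : ∀ z ∈ ball c R, ‖φ z‖ ≤ M) (ht : t ∈ ball c R) :
    ‖dslope φ c t - deriv φ c‖ ≤ 2 * (2 * M / R) / R * dist t c := by
  have hc : c ∈ ball c R := mem_ball_self (pos_of_mem_ball ht)
  have hslope : ∀ z ∈ ball c R, ‖dslope φ c z‖ ≤ 2 * M / R := fun z hz =>
    Complex.norm_dslope_le_div_of_mapsTo_ball hφ (mapsTo_closedBall_two_mul hM hc) hz
  rw [← dslope_same, ← dist_eq_norm]
  exact Complex.dist_le_div_mul_dist_of_mapsTo_ball
    ((Complex.differentiableOn_dslope (isOpen_ball.mem_nhds hc)).2 hφ)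
    (mapsTo_closedBall_two_mul hslope hc) ht

lemma tendstoUniformlyOn_slope_lineDeriv (hr : 0 < r)
    (hf : DifferentiableOn ℂ f (ball x (2 * r))) (hM : ∀ y ∈ ball x (2 * r), ‖f y‖ ≤ M) (v : E) :
    TendstoUniformlyOn (fun (t : ℂ) y => t⁻¹ • (f (y + t • v) - f y))
      (fun y => lineDeriv ℂ f y v) (𝓝[≠] 0) (ball x r) := by
  obtain ⟨R, hR, hRv⟩ : ∃ R > 0, R * ‖v‖ < r := by
    refine ⟨r / (‖v‖ + 1), by positivity, ?_⟩
    rw [div_mul_eq_mul_div, div_lt_iff₀ (by positivity)]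
    nlinarith
  have hbound : Tendsto (fun t : ℂ => 2 * (2 * M / R) / R * dist t 0) (𝓝[≠] 0) (𝓝 0) :=
    (Continuous.tendsto' (by fun_prop) 0 0 (by simp)).mono_left nhdsWithin_le_nhds
  refine tendstoUniformlyOn_iff.2 fun ε hε => ?_
  filter_upwards [hbound.eventually_lt_const hε, self_mem_nhdsWithin,
    nhdsWithin_le_nhds (ball_mem_nhds 0 hR)] with t htε ht0 htR y hy
  have hsub : ball y r ⊆ ball x (2 * r) := ball_subset_ball' (by linarith [mem_ball.1 hy])
  have hquot := norm_dslope_sub_deriv_le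
    ((differentiableOn_comp_line (hf.mono hsub) hRv).mono ball_subset_closedBall)
    (fun ζ hζ => hM _ (hsub (mapsTo_line_ball hRv (ball_subset_closedBall hζ)))) htR
  rw [dslope_of_ne _ ht0, slope_def_module, sub_zero, zero_smul, add_zero] at hquot
  rw [dist_comm, dist_eq_norm]
  exact hquot.trans_lt htε

theorem differentiableOn_lineDeriv (hU : IsOpen U) (hf : DifferentiableOn ℂ f U) (v : E) :
    DifferentiableOn ℂ (fun x => lineDeriv ℂ f x v) U := by
  intro x hx
  obtain ⟨r, hr, hrU, M, hM⟩ : ∃ r > 0, ball x (2 * r) ⊆ U ∧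
      ∃ M, ∀ y ∈ ball x (2 * r), ‖f y‖ ≤ M := by
    obtain ⟨δ, hδ, hbound⟩ := exists_thickening_subset_norm_le isCompact_singleton hU
      (singleton_subset_iff.2 hx) hf.continuousOn
    rw [thickening_singleton] at hbound
    exact ⟨δ / 2, half_pos hδ, by rwa [mul_div_cancel₀ δ two_ne_zero]⟩
  have hlim := tendstoUniformlyOn_slope_lineDeriv hr (hf.mono hrU) hM v
  have hsmall : ∀ᶠ t : ℂ in 𝓝[≠] 0, ‖t • v‖ < r :=
    nhdsWithin_le_nhds ((Continuous.tendsto' (by fun_prop) 0 0 (by simp)).eventually_lt_const hr)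
  refine ((differentiableOn_of_tendstoUniformlyOn isOpen_ball ?_ hlim).differentiableAt
    (ball_mem_nhds x hr)).differentiableWithinAt
  filter_upwards [hsmall] with t ht
  have hshift : MapsTo (fun y => y + t • v) (ball x r) U := fun y hy => hrU <| by
    rw [mem_ball, two_mul]
    calc dist (y + t • v) x ≤ dist (y + t • v) y + dist y x := dist_triangle _ _ _
      _ < r + r := by rw [dist_self_add_left]; exact add_lt_add ht hy
  have hincl : ball x r ⊆ U := (ball_subset_ball (by linarith)).trans hrU
  exact ((hf.comp (f := fun y => y + t • v) (by fun_prop) hshift).sub (hf.mono hincl)).const_smul _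

theorem differentiableOn_iteratedDeriv_fst {G : ℂ × E → F} {W : Set (ℂ × E)} (hW : IsOpen W)
    (hG : DifferentiableOn ℂ G W) (k : ℕ) :
    DifferentiableOn ℂ (fun q => iteratedDeriv k (fun z => G (z, q.2)) q.1) W := by
  induction k with
  | zero => simpa using hG
  | succ k ih =>
    refine (differentiableOn_lineDeriv hW ih (1, 0)).congr fun q _ => ?_
    simp [lineDeriv, iteratedDeriv_succ, deriv_comp_const_add]

theorem differentiableOn_taylorTerm (hU : IsOpen U) (hf : DifferentiableOn ℂ f U) (k : ℕ) :
    DifferentiableOn ℂ (fun q : E × E => taylorTerm f k q.1 q.2) (U ×ˢ univ) := by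
  have hline : Continuous fun q : ℂ × E × E => q.2.1 + q.1 • q.2.2 := by fun_prop
  have hG : DifferentiableOn ℂ (fun q : ℂ × E × E => f (q.2.1 + q.1 • q.2.2))
      ((fun q => q.2.1 + q.1 • q.2.2) ⁻¹' U) :=
    hf.comp (f := fun q : ℂ × E × E => q.2.1 + q.1 • q.2.2) (by fun_prop) fun _ hq => hq
  refine ((differentiableOn_iteratedDeriv_fst (hU.preimage hline) hG k).comp
    (f := fun q => (0, q)) (by fun_prop) fun q hq => ?_).const_smul _
  simpa using hq.1

lemma norm_taylorTerm_le (hf : DifferentiableOn ℂ f (ball x r))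
    (hM : ∀ y ∈ ball x r, ‖f y‖ ≤ M) (hR : 0 < R) (hv : R * ‖v‖ < r) (k : ℕ) :
    ‖taylorTerm f k x v‖ ≤ M / R ^ k := by
  have hcauchy := Complex.norm_iteratedDeriv_le_of_forall_mem_sphere_norm_le k hR
    ((differentiableOn_comp_line hf hv).diffContOnCl_ball subset_rfl)
    fun ζ hζ => hM _ (mapsTo_line_ball hv (sphere_subset_closedBall hζ))
  rw [taylorTerm, norm_smul, norm_inv, Complex.norm_natCast, inv_mul_le_iff₀ (by positivity)]
  rwa [← mul_div_assoc]

theorem hasSum_taylorTerm (hf : DifferentiableOn ℂ f (ball x r)) (hv : ‖v‖ < r) :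
    HasSum (fun k => taylorTerm f k x v) (f (x + v)) := by
  obtain ⟨R, hR, hRv⟩ : ∃ R > 1, R * ‖v‖ < r := by
    have hcont : ContinuousAt (fun R : ℝ => R * ‖v‖) 1 := by fun_prop
    exact (((hcont.eventually_lt_const (by simpa using hv)).filter_mono
      nhdsWithin_le_nhds).and (self_mem_nhdsWithin (s := Ioi 1))).exists.imp fun R h => h.symm
  simpa [taylorTerm] using Complex.hasSum_taylorSeries_on_ball
    ((differentiableOn_comp_line hf hRv).mono ball_subset_closedBall) (z := 1) (by simpa using hR)

theorem differentiableOn_tsum_taylorTerm (hU : IsOpen U) (hf : DifferentiableOn ℂ f U)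
    (hx : x ∈ U) (hM : ∀ (k : ℕ) (v : E) (R : ℝ), 0 < R → R * ‖v‖ < r →
      ‖taylorTerm f k x v‖ ≤ M / R ^ k) :
    DifferentiableOn ℂ (fun v => ∑' k, taylorTerm f k x v) (ball 0 r) := by
  intro v hv
  obtain ⟨ρ, hvρ, hρr⟩ := exists_between (mem_ball_zero_iff.1 hv)
  have hρ : 0 < ρ := (norm_nonneg v).trans_lt hvρ
  have hR : 1 < r / ρ := (one_lt_div hρ).2 hρr
  have hsum : Summable fun k : ℕ => M / (r / ρ) ^ k := by
    simpa only [div_eq_mul_inv, inv_pow] using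
      (summable_geometric_of_lt_one (by positivity) (inv_lt_one_of_one_lt₀ hR)).mul_left M
  have hbound : ∀ k, ∀ w ∈ ball (0 : E) ρ, ‖taylorTerm f k x w‖ ≤ M / (r / ρ) ^ k := by
    intro k w hw
    refine hM k w _ (one_pos.trans hR) ?_
    rw [div_mul_eq_mul_div, div_lt_iff₀ hρ]
    exact mul_lt_mul_of_pos_left (mem_ball_zero_iff.1 hw) (hρ.trans hρr)
  have hterm : ∀ k, Differentiable ℂ fun w => taylorTerm f k x w := fun k =>
    differentiableOn_univ.1 ((differentiableOn_taylorTerm hU hf k).comp (f := fun w => (x, w))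
      (by fun_prop) fun w _ => ⟨hx, mem_univ w⟩)
  exact ((differentiableOn_of_tendstoUniformlyOn isOpen_ball
    (.of_forall fun s => (Differentiable.fun_sum fun k _ => hterm k).differentiableOn)
    (tendstoUniformlyOn_tsum hsum hbound)).differentiableAt
      (isOpen_ball.mem_nhds (mem_ball_zero_iff.2 hvρ))).differentiableWithinAt

theorem exists_differentiableOn_ball_eventuallyEq (hU : IsOpen U) (hf : DifferentiableOn ℂ f U)
    (hx : x ∈ U) (hM : ∀ (k : ℕ) (v : E) (R : ℝ), 0 < R → R * ‖v‖ < r →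
      ‖taylorTerm f k x v‖ ≤ M / R ^ k) :
    ∃ g : E → F, DifferentiableOn ℂ g (ball x r) ∧ f =ᶠ[𝓝 x] g := by
  refine ⟨fun y => ∑' k, taylorTerm f k x (y - x), ?_, ?_⟩
  · exact (differentiableOn_tsum_taylorTerm hU hf hx hM).comp (f := fun y => y - x) (by fun_prop)
      fun y hy => by simpa [dist_eq_norm] using hy
  · obtain ⟨ε, hε, hεU⟩ := Metric.isOpen_iff.1 hU x hx
    filter_upwards [ball_mem_nhds x hε] with y hy
    have hsum := hasSum_taylorTerm (hf.mono hεU) (mem_ball_iff_norm.1 hy)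
    simpa using hsum.tsum_eq.symm

section MaximumPrinciple

variable {X : Type*} [NormedAddCommGroup X] [NormedSpace ℂ X] [Nontrivial X] {D : Set X}
  {φ : X → E} {z : X}

theorem norm_taylorTerm_comp_le_of_frontier (hU : IsOpen U) (hf : DifferentiableOn ℂ f U)
    (hD : Bornology.IsBounded D) (hφ : DiffContOnCl ℂ φ D) (hφU : MapsTo φ (closure D) U)
    {k : ℕ} {C : ℝ} (hC : ∀ w ∈ frontier D, ‖taylorTerm f k (φ w) v‖ ≤ C) (hz : z ∈ closure D) :
    ‖taylorTerm f k (φ z) v‖ ≤ C := by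
  have hterm : DifferentiableOn ℂ (fun y => taylorTerm f k y v) U :=
    (differentiableOn_taylorTerm hU hf k).comp (f := fun y => (y, v)) (by fun_prop)
      fun y hy => ⟨hy, mem_univ v⟩
  have hcomp : DiffContOnCl ℂ (fun w => taylorTerm f k (φ w) v) D :=
    ⟨hterm.comp hφ.differentiableOn (hφU.mono_left subset_closure),
      hterm.continuousOn.comp hφ.continuousOn hφU⟩
  exact Complex.norm_le_of_forall_mem_frontier_norm_le hD hcomp hC hz

theorem exists_differentiableOn_ball_eventuallyEq_of_frontier (hU : IsOpen U)
    (hf : DifferentiableOn ℂ f U) (hD : Bornology.IsBounded D) (hφ : DiffContOnCl ℂ φ D)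
    (hφU : MapsTo φ (closure D) U) (hrU : thickening r (φ '' frontier D) ⊆ U)
    (hM : ∀ y ∈ thickening r (φ '' frontier D), ‖f y‖ ≤ M) (hz : z ∈ closure D) :
    ∃ g : E → F, DifferentiableOn ℂ g (ball (φ z) r) ∧ f =ᶠ[𝓝 (φ z)] g := by
  refine exists_differentiableOn_ball_eventuallyEq hU hf (hφU hz) (M := M) fun k v R hR hRv =>
    norm_taylorTerm_comp_le_of_frontier hU hf hD hφ hφU (fun w hw => ?_) hz
  have hball : ball (φ w) r ⊆ thickening r (φ '' frontier D) :=
    ball_subset_thickening (mem_image_of_mem φ hw) r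
  exact norm_taylorTerm_le (hf.mono (hball.trans hrU)) (fun y hy => hM y (hball hy)) hR hRv k

end MaximumPrinciple

end Holomorphic

theorem extendsHolomorphicallyTo_of_eventuallyEq {n : ℕ} {U : Set (Fin n → ℂ)}
    {f g : (Fin n → ℂ) → ℂ} {p a : Fin n → ℂ} {r : ℝ} (hU : IsOpen U) (hp : p ∈ U)
    (hg : DifferentiableOn ℂ g (ball p r)) (hfg : f =ᶠ[𝓝 p] g) (ha : a ∈ ball p r) :
    ExtendsHolomorphicallyTo U f a := by
  have hr : 0 < r := pos_of_mem_ball ha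
  obtain ⟨ε, hε, hball⟩ := Metric.eventually_nhds_iff_ball.1
    ((hU.eventually_mem hp).and ((isOpen_ball.eventually_mem (mem_ball_self hr)).and hfg))
  exact ⟨ball p r, isOpen_ball, (convex_ball p r).isConnected (nonempty_ball.2 hr), ha, g, hg,
    ball p ε, isOpen_ball, nonempty_ball.2 hε, fun y hy => ⟨(hball y hy).1, (hball y hy).2.1⟩,
    fun y hy => (hball y hy).2.2⟩

theorem extendsHolomorphicallyTo_of_mem_thickening_image_ball {n : ℕ} {U : Set (Fin n → ℂ)}
    {f : (Fin n → ℂ) → ℂ} {S : ℂ → Fin n → ℂ} {a : Fin n → ℂ} {r M : ℝ} (hU : IsOpen U)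
    (hf : DifferentiableOn ℂ f U) (hSc : ContinuousOn S (closedBall 0 1))
    (hSd : DifferentiableOn ℂ S (ball 0 1)) (hSU : S '' closedBall 0 1 ⊆ U)
    (hrU : thickening r (S '' sphere 0 1) ⊆ U)
    (hM : ∀ y ∈ thickening r (S '' sphere 0 1), ‖f y‖ ≤ M)
    (ha : a ∈ thickening r (S '' ball 0 1)) : ExtendsHolomorphicallyTo U f a := by
  obtain ⟨_, ⟨z, hz, rfl⟩, haz⟩ := mem_thickening_iff.1 ha
  rw [← closure_ball (0 : ℂ) one_ne_zero] at hSc hSU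
  rw [← frontier_ball (0 : ℂ) one_ne_zero] at hrU hM
  have hSU' : MapsTo S (closure (ball 0 1)) U := mapsTo_iff_image_subset.2 hSU
  obtain ⟨g, hg, hfg⟩ := exists_differentiableOn_ball_eventuallyEq_of_frontier hU hf isBounded_ball
    ⟨hSd, hSc⟩ hSU' hrU hM (subset_closure hz)
  exact extendsHolomorphicallyTo_of_eventuallyEq hU (hSU' (subset_closure hz)) hg hfg haz

/-- Every domain of holomorphy satisfies the continuity principle. -/
theorem isDomainOfHolomorphy_satisfiesContinuityPrinciple {n : ℕ} (U : Set (Fin n → ℂ))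
    (h : IsDomainOfHolomorphy U) : SatisfiesContinuityPrinciple U := by
  obtain ⟨hU, -, f, hf, hext⟩ := h
  intro S hSc hSd hSU B T hB hBU _ hSB hST t ht
  by_contra htU
  obtain ⟨δ, hδ, hδU, M, hM⟩ := exists_thickening_subset_norm_le hB hU hBU hf.continuousOn
  obtain ⟨J₁, hJ₁⟩ := hSB (δ / 2) (half_pos hδ)
  obtain ⟨J₂, hJ₂⟩ := hST (δ / 2) (half_pos hδ)
  let j := max J₁ J₂
  have hnear : thickening (δ / 2) (S j '' sphere 0 1) ⊆ thickening δ B :=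
    calc thickening (δ / 2) (S j '' sphere 0 1) ⊆ thickening (δ / 2) (thickening (δ / 2) B) :=
          thickening_subset_of_subset _ (hJ₁ j (le_max_left J₁ J₂)).1
      _ ⊆ thickening δ B := by simpa using thickening_thickening_subset (δ / 2) (δ / 2) B
  exact hext t htU (extendsHolomorphicallyTo_of_mem_thickening_image_ball hU hf (hSc j) (hSd j)
    (hSU j) (hnear.trans hδU) (fun y hy => hM y (hnear hy)) ((hJ₂ j (le_max_right J₁ J₂)).2 ht))
end

section
/- Suppose n ≥ 2 and U ⊆ ℂⁿ is a domain such that the complement of U is nonempty and compact. Then U is not a domain of holomorphy. -/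
open Set Metric Filter Topology

/-!
After fixing a coordinate `i`, let `R` be so large that every point with `R ≤ ‖z i‖` lies in `U`.
Cauchy's integral over the circle `‖w‖ = R` in the `i`-th variable then makes sense for every `z`
with `‖z i‖ < R`, even when the disc spanned by the circle leaves `U`, and is holomorphic there.
Where the whole complex line in direction `i` stays inside `U`, Cauchy's formula shows that it
equals `f`. If `Uᶜ` is bounded in another coordinate `j`, this happens as soon as `‖z j‖` is large,
so the integral extends `f` across `Uᶜ`.
-/

section ParametricIntegral

variable {E G X : Type*} [NormedAddCommGroup E] [NormedSpace ℂ E]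
  [NormedAddCommGroup G] [NormedSpace ℂ G] [TopologicalSpace X] {V : Set E} {F : E → X → G}

theorem exists_ball_norm_fderiv_le {K : Set X} (hK : IsCompact K) (hV : IsOpen V)
    (hF : ContinuousOn (Function.uncurry F) (V ×ˢ K))
    (hd : ∀ t ∈ K, DifferentiableOn ℂ (F · t) V) {x₀ : E} (hx₀ : x₀ ∈ V) :
    ∃ r > 0, ball x₀ r ⊆ V ∧ ∃ C, ∀ t ∈ K, ∀ x ∈ ball x₀ r, ‖fderiv ℂ (F · t) x‖ ≤ C := by
  obtain ⟨v, hv, hclose⟩ := hK.mem_uniformity_of_prod hF hx₀ (dist_mem_uniformity one_pos)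
  rw [hV.nhdsWithin_eq hx₀] at hv
  obtain ⟨ε, hε, hεv⟩ := Metric.mem_nhds_iff.1 (inter_mem (hV.mem_nhds hx₀) hv)
  have hball : ball x₀ (ε / 2) ⊆ ball x₀ ε := ball_subset_ball (half_le_self hε.le)
  refine ⟨ε / 2, half_pos hε, fun x hx ↦ (hεv (hball hx)).1, 2 / (ε / 2), fun t ht x hx ↦ ?_⟩
  have hsub : ball x (ε / 2) ⊆ ball x₀ ε :=
    ball_subset_ball' (by linarith [mem_ball.1 hx])
  refine Complex.norm_fderiv_le_div_of_mapsTo_ball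
    ((hd t ht).mono fun y hy ↦ (hεv (hsub hy)).1) (fun y hy ↦ ?_) (half_pos hε)
  have hy₀ : dist (F y t) (F x₀ t) < 1 := hclose y (hεv (hsub hy)).2 t ht
  have hx₀' : dist (F x t) (F x₀ t) < 1 := hclose x (hεv (hball hx)).2 t ht
  rw [mem_closedBall]
  linarith [dist_triangle_right (F y t) (F x t) (F x₀ t)]

variable [ProperSpace E]

theorem continuousOn_fderiv_of_continuousOn_uncurry {s : Set X} (hV : IsOpen V)
    (hF : ContinuousOn (Function.uncurry F) (V ×ˢ s))
    (hd : ∀ t ∈ s, DifferentiableOn ℂ (F · t) V) {x : E} (hx : x ∈ V) :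
    ContinuousOn (fun t ↦ fderiv ℂ (F · t) x) s := by
  intro t₀ ht₀
  obtain ⟨r, hr, hrV⟩ := nhds_basis_closedBall.mem_iff.1 (hV.mem_nhds hx)
  have hswap : ContinuousOn (Function.uncurry fun t y ↦ F y t) (s ×ˢ closedBall x r) :=
    hF.comp continuous_swap.continuousOn fun p hp ↦ ⟨hrV hp.2, hp.1⟩
  refine Metric.tendsto_nhds.2 fun ε hε ↦ ?_
  obtain ⟨v, hv, hclose⟩ := (isCompact_closedBall x r).mem_uniformity_of_prod hswap ht₀
    (dist_mem_uniformity (show 0 < ε * r / 4 by positivity))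
  filter_upwards [hv, self_mem_nhdsWithin] with t htv hts
  have hdiff : ∀ u ∈ s, DifferentiableAt ℂ (F · u) x := fun u hu ↦
    (hd u hu).differentiableAt (hV.mem_nhds hx)
  have hbound : ∀ y ∈ ball x r, ‖F y t - F y t₀‖ ≤ ε * r / 4 := fun y hy ↦ by
    rw [← dist_eq_norm]
    exact (hclose t htv y (ball_subset_closedBall hy)).le
  have hcauchy : ‖fderiv ℂ (fun y ↦ F y t - F y t₀) x‖ ≤ ε * r / 2 / r := by
    refine Complex.norm_fderiv_le_div_of_mapsTo_ball
      (((hd t hts).sub (hd t₀ ht₀)).mono (ball_subset_closedBall.trans hrV)) (fun y hy ↦ ?_) hr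
    rw [mem_closedBall, dist_eq_norm]
    linarith [norm_sub_le (F y t - F y t₀) (F x t - F x t₀), hbound y hy,
      hbound x (mem_ball_self hr)]
  rw [dist_eq_norm, ← fderiv_fun_sub (hdiff t hts) (hdiff t₀ ht₀)]
  calc ‖fderiv ℂ (fun y ↦ F y t - F y t₀) x‖ ≤ ε * r / 2 / r := hcauchy
    _ = ε / 2 := by field_simp
    _ < ε := half_lt_self hε

theorem differentiableOn_setIntegral_of_continuousOn_uncurry [T2Space X] [MeasurableSpace X]
    [OpensMeasurableSpace X] {μ : MeasureTheory.Measure X}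
    [MeasureTheory.IsFiniteMeasureOnCompacts μ] {K : Set X} (hK : IsCompact K) (hV : IsOpen V)
    (hF : ContinuousOn (Function.uncurry F) (V ×ˢ K))
    (hd : ∀ t ∈ K, DifferentiableOn ℂ (F · t) V) :
    DifferentiableOn ℂ (fun x ↦ ∫ t in K, F x t ∂μ) V := by
  intro x₀ hx₀
  have hcont : ∀ x ∈ V, ContinuousOn (F x) K := fun x hx ↦ hF.uncurry_left x hx
  obtain ⟨r, hr, hrV, C, hC⟩ := exists_ball_norm_fderiv_le hK hV hF hd hx₀
  have hderiv : ∀ t ∈ K, ∀ x ∈ ball x₀ r, HasFDerivAt (F · t) (fderiv ℂ (F · t) x) x :=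
    fun t ht x hx ↦ ((hd t ht).differentiableAt (hV.mem_nhds (hrV hx))).hasFDerivAt
  have hfderiv := continuousOn_fderiv_of_continuousOn_uncurry hV hF hd hx₀
  exact (hasFDerivAt_integral_of_dominated_of_fderiv_le (ball_mem_nhds x₀ hr)
    (eventually_of_mem (hV.mem_nhds hx₀) fun x hx ↦
      (hcont x hx).aestronglyMeasurable_of_isCompact hK hK.measurableSet)
    ((hcont x₀ hx₀).integrableOn_compact hK)
    (hfderiv.aestronglyMeasurable_of_isCompact hK hK.measurableSet)
    (MeasureTheory.ae_restrict_of_forall_mem hK.measurableSet hC)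
    (MeasureTheory.integrableOn_const hK.measure_lt_top.ne)
    (MeasureTheory.ae_restrict_of_forall_mem hK.measurableSet
      hderiv)).differentiableAt.differentiableWithinAt

theorem differentiableOn_circleIntegral_of_continuousOn_uncurry {F : E → ℂ → G} {c : ℂ} {R : ℝ}
    (hR : 0 ≤ R) (hV : IsOpen V) (hF : ContinuousOn (Function.uncurry F) (V ×ˢ sphere c R))
    (hd : ∀ w ∈ sphere c R, DifferentiableOn ℂ (F · w) V) :
    DifferentiableOn ℂ (fun x ↦ ∮ w in C(c, R), F x w) V := by
  have hmem : ∀ θ, circleMap c R θ ∈ sphere c R := circleMap_mem_sphere c hR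
  have hmap : Continuous fun p : E × ℝ ↦ (p.1, circleMap c R p.2) := by fun_prop
  have hspeed : Continuous fun p : E × ℝ ↦ deriv (circleMap c R) p.2 := by
    simp only [deriv_circleMap]
    fun_prop
  simp only [circleIntegral, intervalIntegral.integral_of_le Real.two_pi_pos.le,
    ← MeasureTheory.integral_Icc_eq_integral_Ioc]
  refine differentiableOn_setIntegral_of_continuousOn_uncurry isCompact_Icc hV ?_
    fun θ _ ↦ (hd _ (hmem θ)).const_smul _
  exact hspeed.continuousOn.smul (hF.comp hmap.continuousOn fun p hp ↦ ⟨hp.1, hmem p.2⟩)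

end ParametricIntegral

section CauchyIntegral

variable {ι G : Type*} [DecidableEq ι] [NormedAddCommGroup G] [NormedSpace ℂ G]
  {U V : Set (ι → ℂ)} {f : (ι → ℂ) → G} {i : ι} {c : ℂ} {R : ℝ}

/-- The Cauchy integral of `f` in the `i`-th variable over the circle of centre `c` and radius `R`,
the other variables being frozen. It reproduces `f` at points whose `i`-th disc lies in the domain
of `f`, and serves to extend `f` to points for which only the circle does. -/
noncomputable def partialCauchyIntegral (f : (ι → ℂ) → G) (i : ι) (c : ℂ) (R : ℝ) (z : ι → ℂ) : G :=
  (2 * Real.pi * Complex.I : ℂ)⁻¹ •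
    ∮ w in C(c, R), (w - z i)⁻¹ • f (Function.update z i w)

variable [Finite ι]

theorem differentiable_update_left (i : ι) (w : ℂ) :
    Differentiable ℂ fun z : ι → ℂ ↦ Function.update z i w := by
  cases nonempty_fintype ι
  refine differentiable_pi.2 fun j ↦ ?_
  obtain rfl | hj := eq_or_ne j i
  · simp only [Function.update_self, differentiable_const]
  · simp only [Function.update_of_ne hj]
    fun_prop

theorem differentiableOn_partialCauchyIntegral (hf : DifferentiableOn ℂ f U) (hV : IsOpen V)
    (hball : ∀ z ∈ V, z i ∈ ball c R)
    (hcircle : ∀ z ∈ V, ∀ w ∈ sphere c R, Function.update z i w ∈ U) :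
    DifferentiableOn ℂ (partialCauchyIntegral f i c R) V := by
  cases nonempty_fintype ι
  obtain rfl | ⟨z₀, hz₀⟩ := V.eq_empty_or_nonempty
  · exact differentiableOn_empty
  have hne : ∀ z ∈ V, ∀ w ∈ sphere c R, w - z i ≠ 0 := fun z hz w hw ↦
    sub_ne_zero.2 (ne_of_mem_of_not_mem hw fun h ↦ (mem_ball.1 (hball z hz)).ne h)
  have hupdate : Continuous fun p : (ι → ℂ) × ℂ ↦ Function.update p.1 i p.2 :=
    continuous_fst.update i continuous_snd
  refine (differentiableOn_circleIntegral_of_continuousOn_uncurry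
    (pos_of_mem_ball (hball z₀ hz₀)).le hV ?_ fun w hw ↦ ?_).const_smul _
  · refine ContinuousOn.smul (ContinuousOn.inv₀ (by fun_prop) fun p hp ↦ hne p.1 hp.1 p.2 hp.2) ?_
    exact hf.continuousOn.comp hupdate.continuousOn fun p hp ↦ hcircle p.1 hp.1 p.2 hp.2
  · refine DifferentiableOn.smul (DifferentiableOn.inv (by fun_prop) fun z hz ↦ hne z hz w hw) ?_
    exact hf.comp (differentiable_update_left i w).differentiableOn fun z hz ↦ hcircle z hz w hw

theorem partialCauchyIntegral_eq [CompleteSpace G] (hf : DifferentiableOn ℂ f U) {z : ι → ℂ}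
    (hz : z i ∈ ball c R) (hdisc : ∀ w ∈ closedBall c R, Function.update z i w ∈ U) :
    partialCauchyIntegral f i c R z = f z := by
  cases nonempty_fintype ι
  have hslice : DifferentiableOn ℂ (fun w ↦ f (Function.update z i w)) (closedBall c R) :=
    hf.comp (fun w _ ↦ (hasFDerivAt_update z w).differentiableAt.differentiableWithinAt) hdisc
  simpa only [partialCauchyIntegral, Function.update_eq_self] using
    (hslice.diffContOnCl_ball subset_rfl).two_pi_i_inv_smul_circleIntegral_sub_inv_smul hz

end CauchyIntegral

theorem extendsHolomorphicallyTo_of_isBounded_image_compl {n : ℕ} {U : Set (Fin n → ℂ)}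
    {f : (Fin n → ℂ) → ℂ} (hf : DifferentiableOn ℂ f U) {i : Fin n}
    (hbdd : Bornology.IsBounded ((fun z ↦ z i) '' Uᶜ))
    (hlines : (interior {z | ∀ w, Function.update z i w ∈ U}).Nonempty) (a : Fin n → ℂ) :
    ExtendsHolomorphicallyTo U f a := by
  obtain ⟨p, hp⟩ := hlines
  obtain ⟨R, hR⟩ := ((hbdd.insert (p i)).insert (a i)).subset_ball 0
  let V : Set (Fin n → ℂ) := (fun z ↦ z i) ⁻¹' ball 0 R
  have hVo : IsOpen V := isOpen_ball.preimage (continuous_apply i)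
  have hVc : Convex ℝ V :=
    (convex_ball 0 R).linear_preimage (LinearMap.proj i : (Fin n → ℂ) →ₗ[ℝ] ℂ)
  have haV : a ∈ V := hR (mem_insert _ _)
  have hpV : p ∈ V := hR (mem_insert_of_mem _ (mem_insert _ _))
  have hcompl : Uᶜ ⊆ V := fun z hz ↦
    hR (mem_insert_of_mem _ (mem_insert_of_mem _ (mem_image_of_mem _ hz)))
  have hcircle : ∀ z, ∀ w ∈ sphere (0 : ℂ) R, Function.update z i w ∈ U := fun z w hw ↦ by
    by_contra hU
    have hwR : Function.update z i w i ∈ ball 0 R := hcompl hU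
    rw [Function.update_self] at hwR
    exact (mem_ball.1 hwR).ne hw
  refine ⟨V, hVo, ⟨⟨a, haV⟩, hVc.isPreconnected⟩, haV, partialCauchyIntegral f i 0 R,
    differentiableOn_partialCauchyIntegral hf hVo (fun _ hz ↦ hz) fun z _ ↦ hcircle z,
    interior {z | ∀ w, Function.update z i w ∈ U} ∩ V, isOpen_interior.inter hVo, ⟨p, hp, hpV⟩,
    fun z ⟨hz, hzV⟩ ↦ ⟨?_, hzV⟩, fun z ⟨hz, hzV⟩ ↦ ?_⟩
  · simpa only [Function.update_eq_self] using interior_subset hz (z i)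
  · exact (partialCauchyIntegral_eq hf hzV fun w _ ↦ interior_subset hz w).symm

theorem nonempty_interior_setOf_forall_update_mem {ι : Type*} [DecidableEq ι] {U : Set (ι → ℂ)}
    {i j : ι} (hij : i ≠ j) (hbdd : Bornology.IsBounded ((fun z ↦ z j) '' Uᶜ)) :
    (interior {z | ∀ w, Function.update z i w ∈ U}).Nonempty := by
  obtain ⟨R, hR⟩ := hbdd.subset_closedBall 0
  obtain ⟨b, hb⟩ := NormedSpace.exists_lt_norm ℂ ℂ R
  have hopen : IsOpen ((fun z : ι → ℂ ↦ z j) ⁻¹' (closedBall 0 R)ᶜ) :=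
    isClosed_closedBall.isOpen_compl.preimage (continuous_apply j)
  refine ⟨fun _ ↦ b, interior_maximal (fun z hz w ↦ ?_) hopen ?_⟩
  · by_contra hU
    have hzR := hR (mem_image_of_mem _ hU)
    rw [Function.update_of_ne hij.symm] at hzR
    exact hz hzR
  · simpa using hb

theorem not_isDomainOfHolomorphy_of_compl_compact_general {n : ℕ} {U : Set (Fin n → ℂ)}
    {i : Fin n} (hne : Uᶜ.Nonempty) (hbdd : Bornology.IsBounded ((fun z ↦ z i) '' Uᶜ))
    (hlines : (interior {z | ∀ w, Function.update z i w ∈ U}).Nonempty) :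
    ¬ IsDomainOfHolomorphy U := by
  rintro ⟨-, -, f, hf, hext⟩
  obtain ⟨a, ha⟩ := hne
  exact hext a ha (extendsHolomorphicallyTo_of_isBounded_image_compl hf hbdd hlines a)

/-- If `n ≥ 2` and `U ⊆ ℂⁿ` is a domain whose complement is nonempty and compact, then `U` is
not a domain of holomorphy. -/
theorem not_isDomainOfHolomorphy_of_compl_compact {n : ℕ} (hn : 2 ≤ n)
    (U : Set (Fin n → ℂ)) (hUo : IsOpen U) (hUc : IsConnected U)
    (hne : Uᶜ.Nonempty) (hcpt : IsCompact Uᶜ) :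
    ¬ IsDomainOfHolomorphy U := by
  have hbdd (k : Fin n) : Bornology.IsBounded ((fun z : Fin n → ℂ ↦ z k) '' Uᶜ) :=
    (hcpt.image (continuous_apply k)).isBounded
  obtain ⟨i, j, hij⟩ := (Fin.nontrivial_iff_two_le.2 hn).exists_pair_ne
  exact not_isDomainOfHolomorphy_of_compl_compact_general hne (hbdd i)
    (nonempty_interior_setOf_forall_update_mem hij (hbdd j))
end
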